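/- A quiver Q satisfies Condition (L) (every cycle has an exit) if and only if its Kronecker square Q̂ satisfies Condition (L). -/

import Mathlib

structure Quiv where
  V : Type
  E : Type
  s : E → V
  r : E → V

namespace Quiv

def kron (Q Q' : Quiv) : Quiv :=
  ⟨Q.V × Q'.V, Q.E × Q'.E, fun e => (Q.s e.1, Q'.s e.2), fun e => (Q.r e.1, Q'.r e.2)⟩

def IsSink (Q : Quiv) (v : Q.V) : Prop := ∀ e, Q.s e ≠ v

def IsSource (Q : Quiv) (v : Q.V) : Prop := ∀ e, Q.r e ≠ v

def Isolated (Q : Quiv) (v : Q.V) : Prop := Q.IsSink v ∧ Q.IsSource v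

inductive Reach (Q : Quiv) : Q.V → Q.V → Prop
  | refl (v : Q.V) : Reach Q v v
  | step (e : Q.E) {v : Q.V} : Reach Q (Q.r e) v → Reach Q (Q.s e) v

inductive PathN (Q : Quiv) : ℕ → Q.V → Q.V → Prop
  | nil (v : Q.V) : PathN Q 0 v v
  | cons (e : Q.E) {n : ℕ} {v : Q.V} : PathN Q n (Q.r e) v → PathN Q (n + 1) (Q.s e) v

def IsClosedPath (Q : Quiv) (l : List Q.E) : Prop :=
  l ≠ [] ∧ l.Chain' (fun e f => Q.r e = Q.s f) ∧
    l.getLast?.map Q.r = l.head?.map Q.s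

def IsCycle (Q : Quiv) (l : List Q.E) : Prop :=
  Q.IsClosedPath l ∧ (l.map Q.s).Nodup

end Quiv

namespace Quiv

/-- A path has an exit if some arrow departs from a source vertex of one of its
arrows and differs from that arrow. -/
def HasExit (Q : Quiv) (l : List Q.E) : Prop :=
  ∃ e' ∈ l, ∃ e : Q.E, Q.s e = Q.s e' ∧ e ≠ e'

/-- Condition (L): every cycle has an exit. -/
def ConditionL (Q : Quiv) : Prop := ∀ l : List Q.E, Q.IsCycle l → Q.HasExit l

end Quiv

/-!
A closed path contains a cycle, so Condition (L) says that every *closed path* has an exit. Unlike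
cycles, closed paths are preserved by all morphisms of quivers, in particular by the first
projection of a Kronecker product and by the diagonal of a Kronecker square; exits pull back along
these two.
-/

theorem exists_eq_append_of_not_nodup_map {α β : Type*} {f : α → β} {l : List α}
    (h : ¬(l.map f).Nodup) :
    ∃ l₁ a l₂ b l₃, l = l₁ ++ (a :: l₂ ++ b :: l₃) ∧ f a = f b := by
  rw [List.Nodup, List.pairwise_map, List.pairwise_iff_forall_sublist] at h
  push Not at h
  obtain ⟨a, b, hab, hf⟩ := h
  obtain ⟨r₁, r₂, rfl, ha, hb⟩ := List.cons_sublist_iff.1 hab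
  obtain ⟨l₁, m₁, rfl⟩ := List.append_of_mem ha
  obtain ⟨m₂, l₃, rfl⟩ := List.append_of_mem (List.singleton_sublist.1 hb)
  exact ⟨l₁, a, m₁ ++ m₂, b, l₃, by simp only [List.append_assoc, List.cons_append], hf⟩

namespace Quiv

variable {Q Q' : Quiv}

theorem isClosedPath_of_isChain_append {p q : List Q.E} {e f : Q.E}
    (hchain : (e :: p ++ f :: q).IsChain (Q.r · = Q.s ·)) (hs : Q.s e = Q.s f) :
    Q.IsClosedPath (e :: p) := by
  obtain ⟨hp, -, hjoin⟩ := List.isChain_append.1 hchain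
  refine ⟨List.cons_ne_nil e p, hp, ?_⟩
  have hlast := List.getLast?_eq_some_getLast (List.cons_ne_nil e p)
  rw [hlast, List.head?_cons, Option.map_some, Option.map_some, hs, hjoin _ hlast f rfl]

theorem IsClosedPath.exists_isCycle_subset {l : List Q.E} (hl : Q.IsClosedPath l) :
    ∃ c, Q.IsCycle c ∧ c ⊆ l := by
  by_cases hnodup : (l.map Q.s).Nodup
  · exact ⟨l, ⟨hl, hnodup⟩, List.Subset.refl l⟩
  · obtain ⟨l₁, e, l₂, f, l₃, hsplit, hs⟩ := exists_eq_append_of_not_nodup_map hnodup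
    have hchain := hl.2.1
    rw [hsplit] at hchain
    have hclosed : Q.IsClosedPath (e :: l₂) :=
      isClosedPath_of_isChain_append hchain.right_of_append hs
    have hinfix : e :: l₂ <:+: l := ⟨l₁, f :: l₃, by rw [hsplit, List.append_assoc]⟩
    obtain ⟨c, hc, hsub⟩ := hclosed.exists_isCycle_subset
    exact ⟨c, hc, List.Subset.trans hsub hinfix.subset⟩
termination_by l.length
decreasing_by
  simp only [hsplit, List.length_append, List.length_cons]
  lia

theorem HasExit.mono {l l' : List Q.E} (h : Q.HasExit l) (hsub : l ⊆ l') : Q.HasExit l' :=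
  let ⟨e', he', hexit⟩ := h
  ⟨e', hsub he', hexit⟩

theorem conditionL_iff_forall_isClosedPath :
    Q.ConditionL ↔ ∀ l, Q.IsClosedPath l → Q.HasExit l := by
  refine ⟨fun h l hl => ?_, fun h l hl => h l hl.1⟩
  obtain ⟨c, hc, hsub⟩ := hl.exists_isCycle_subset
  exact (h c hc).mono hsub

/-- A morphism of quivers: maps on vertices and on arrows compatible with source and range. It is
used to transport closed paths between a quiver and its Kronecker square. -/
structure Hom (Q Q' : Quiv) where
  onV : Q.V → Q'.V
  onE : Q.E → Q'.E
  s_onE : ∀ e, Q'.s (onE e) = onV (Q.s e)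
  r_onE : ∀ e, Q'.r (onE e) = onV (Q.r e)

theorem IsClosedPath.map {l : List Q.E} (hl : Q.IsClosedPath l) (φ : Hom Q Q') :
    Q'.IsClosedPath (l.map φ.onE) := by
  obtain ⟨hne, hchain, hends⟩ := hl
  refine ⟨mt List.map_eq_nil_iff.1 hne, ?_, ?_⟩
  · refine (List.isChain_map φ.onE).2 (hchain.imp fun e f hef => ?_)
    rw [φ.r_onE, φ.s_onE, hef]
  · have hr : Q'.r ∘ φ.onE = φ.onV ∘ Q.r := funext φ.r_onE
    have hs : Q'.s ∘ φ.onE = φ.onV ∘ Q.s := funext φ.s_onE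
    rw [List.getLast?_map, List.head?_map, Option.map_map, Option.map_map, hr, hs,
      ← Option.map_map, ← Option.map_map, hends]

/-- The first projection of a Kronecker product, as a morphism of quivers. -/
def kronFst (Q Q' : Quiv) : Hom (Q.kron Q') Q where
  onV := Prod.fst
  onE := Prod.fst
  s_onE _ := rfl
  r_onE _ := rfl

/-- The diagonal embedding of a quiver into its Kronecker square, as a morphism of quivers. -/
def kronDiag (Q : Quiv) : Hom Q (Q.kron Q) where
  onV v := (v, v)
  onE e := (e, e)
  s_onE _ := rfl
  r_onE _ := rfl

theorem HasExit.of_map_kronFst {l : List (Q.kron Q').E}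
    (h : Q.HasExit (l.map (kronFst Q Q').onE)) : (Q.kron Q').HasExit l := by
  obtain ⟨_, hmem, e, hs, hne⟩ := h
  obtain ⟨x, hx, rfl⟩ := List.mem_map.1 hmem
  exact ⟨x, hx, (e, x.2), Prod.ext hs rfl, fun heq => hne (congrArg Prod.fst heq)⟩

theorem HasExit.of_map_kronDiag {l : List Q.E}
    (h : (Q.kron Q).HasExit (l.map (kronDiag Q).onE)) : Q.HasExit l := by
  obtain ⟨_, hmem, x, hs, hne⟩ := h
  obtain ⟨e, he, rfl⟩ := List.mem_map.1 hmem
  by_cases hfst : x.1 = e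
  · exact ⟨e, he, x.2, congrArg Prod.snd hs, fun hsnd => hne (Prod.ext hfst hsnd)⟩
  · exact ⟨e, he, x.1, congrArg Prod.fst hs, hfst⟩

theorem ConditionL.kron_right (h : Q.ConditionL) (Q' : Quiv) : (Q.kron Q').ConditionL := by
  rw [conditionL_iff_forall_isClosedPath] at h ⊢
  exact fun l hl => (h _ (hl.map (kronFst Q Q'))).of_map_kronFst

theorem ConditionL.of_kron_self (h : (Q.kron Q).ConditionL) : Q.ConditionL := by
  rw [conditionL_iff_forall_isClosedPath] at h ⊢
  exact fun l hl => (h _ (hl.map (kronDiag Q))).of_map_kronDiag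

end Quiv

/-- A quiver satisfies Condition (L) iff its Kronecker square satisfies Condition (L). -/
theorem kron_conditionL_iff (Q : Quiv) :
    Q.ConditionL ↔ (Q.kron Q).ConditionL :=
  ⟨fun h => h.kron_right Q, fun h => h.of_kron_self⟩
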